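/- Let A ∈ C²(ℝ) be strictly convex (A″ > 0) and let σ be the Rankine–Hugoniot speed associated with A. Let w⁺, w⁻, v ∈ ℝ satisfy w⁺ ≤ w⁻ and let ẋ ∈ ℝ be arbitrary. Then |w⁺ − v|·(σ(w⁺,v) − ẋ) − |w⁻ − v|·(σ(w⁻,v) − ẋ) ≤ |w⁻ − w⁺| · |ẋ − σ(w⁻,w⁺)|. -/

import Mathlib

/-! Put `g x = A x - ẋ * x`, a convex function. Clearing denominators,
`(w - v) * (σ(w,v) - ẋ) = g w - g v` (`sub_mul_RHspeed`), so the right-hand side is `|g w⁻ - g w⁺|`.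
If `v` lies outside `(w⁺, w⁻)`, the left-hand side is `±(g w⁻ - g w⁺)`. If `v` lies in `[w⁺, w⁻]`,
it is `2 g v - g w⁺ - g w⁻`, and convexity gives `g v ≤ max (g w⁺) (g w⁻)`, whence the bound
because `2 max a b - a - b = |a - b|`. -/

/-- The Rankine–Hugoniot speed associated with a flux `A`. -/
noncomputable def RHspeed (A : ℝ → ℝ) (v w : ℝ) : ℝ :=
  if v = w then deriv A w else (A v - A w) / (v - w)

/-- The value of `RHspeed` on the diagonal is irrelevant here, as both sides vanish. -/
lemma sub_mul_RHspeed (A : ℝ → ℝ) (w v c : ℝ) :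
    (w - v) * (RHspeed A w v - c) = (A w - c * w) - (A v - c * v) := by
  unfold RHspeed
  split_ifs with h
  · subst h; ring
  · have : w - v ≠ 0 := sub_ne_zero.mpr h
    field_simp
    ring

/-- For a `C²`, strictly convex flux (`A″ > 0`), if `w⁺ ≤ w⁻` then for any `v` and
any speed `ẋ`, `|w⁺ − v|·(σ(w⁺,v) − ẋ) − |w⁻ − v|·(σ(w⁻,v) − ẋ) ≤ |w⁻ − w⁺|·|ẋ − σ(w⁻,w⁺)|`. -/
theorem stmt12 (A : ℝ → ℝ) (hA : ContDiff ℝ 2 A)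
    (hconv : ∀ x, 0 < deriv (deriv A) x)
    (wp wm v xdot : ℝ) (hord : wp ≤ wm) :
    |wp - v| * (RHspeed A wp v - xdot) - |wm - v| * (RHspeed A wm v - xdot)
      ≤ |wm - wp| * |xdot - RHspeed A wm wp| := by
  have hcv : ConvexOn ℝ Set.univ A :=
    (strictConvexOn_univ_of_deriv2_pos hA.continuous hconv).convexOn
  have hg : ConvexOn ℝ Set.univ (fun x => A x - xdot * x) := by
    refine ⟨convex_univ, fun x _ y _ a b ha hb hab => ?_⟩
    have := hcv.2 (Set.mem_univ x) (Set.mem_univ y) ha hb hab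
    simp only [smul_eq_mul] at this ⊢
    linarith
  have hp := sub_mul_RHspeed A wp v xdot
  have hm := sub_mul_RHspeed A wm v xdot
  have hR : |wm - wp| * |xdot - RHspeed A wm wp|
      = |(A wm - xdot * wm) - (A wp - xdot * wp)| := by
    rw [abs_sub_comm xdot, ← abs_mul, sub_mul_RHspeed]
  rw [hR]
  have h1 := le_abs_self ((A wm - xdot * wm) - (A wp - xdot * wp))
  have h2 := neg_abs_le ((A wm - xdot * wm) - (A wp - xdot * wp))
  rcases le_total v wp with hv | hv
  · rw [abs_of_nonneg (sub_nonneg.mpr hv), abs_of_nonneg (sub_nonneg.mpr (hv.trans hord))]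
    linarith
  · rcases le_total v wm with hv' | hv'
    · rw [abs_of_nonpos (sub_nonpos.mpr hv), abs_of_nonneg (sub_nonneg.mpr hv')]
      have hmax := hg.le_max_of_mem_Icc (Set.mem_univ wp) (Set.mem_univ wm) ⟨hv, hv'⟩
      rcases le_max_iff.mp hmax with h | h <;> linarith
    · rw [abs_of_nonpos (sub_nonpos.mpr hv), abs_of_nonpos (sub_nonpos.mpr hv')]
      linarith
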